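/- (Titchmarsh convolution theorem.) Let f, g ∈ L¹[0,b] be such that the convolution (f ∗ g)(t) = ∫₀^t f(t−s) g(s) ds vanishes for almost every t ∈ [0,b]. Then there exist λ, μ ≥ 0 with λ + μ ≥ b such that f = 0 almost everywhere on [0,λ] and g = 0 almost everywhere on [0,μ]. -/

import Mathlib

open MeasureTheory Set Filter Topology

def Nice (e : ℝ → ℝ) : Prop := Integrable e ∧ ∃ B : ℝ, ∀ t, t ∉ Icc 0 B → e t = 0

lemma Nice.mul {e : ℝ → ℝ} (he : Nice e) {φ : ℝ → ℝ} (hφ : Continuous φ) :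
    Nice (fun t => φ t * e t) := by
  obtain ⟨hi, B, hB⟩ := he
  refine ⟨?_, B, fun t ht => by simp [hB t ht]⟩
  have h1 : IntegrableOn (fun t => φ t * e t) (Icc 0 B) :=
    IntegrableOn.continuousOn_mul hφ.continuousOn hi.integrableOn isCompact_Icc
  rw [← integrable_indicator_iff measurableSet_Icc] at h1
  refine h1.congr (Eventually.of_forall fun t => ?_)
  by_cases ht : t ∈ Icc 0 B
  · simp [ht]
  · simp [ht, hB t ht]

lemma exp_swap {e : ℝ → ℝ} (he : Nice e) {φ : ℝ → ℝ} (hφ : Continuous φ) :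
    HasSum (fun n : ℕ => ∫ t, (φ t)^n / (n.factorial : ℝ) * e t) (∫ t, Real.exp (φ t) * e t) := by
  have hN := he
  obtain ⟨hi, B, hB⟩ := he
  obtain ⟨M, hM⟩ := (isCompact_Icc (a := (0:ℝ)) (b := B)).exists_bound_of_continuousOn hφ.continuousOn
  have key := hasSum_integral_of_summable_integral_norm (μ := volume)
    (F := fun (n : ℕ) t => (φ t)^n / (n.factorial : ℝ) * e t)
    (fun n => (hN.mul (φ := fun t => (φ t)^n / (n.factorial : ℝ)) (by fun_prop)).1) ?_
  · have heq : (∫ t, Real.exp (φ t) * e t)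
        = ∫ t, (∑' n : ℕ, (φ t)^n / (n.factorial : ℝ) * e t) := by
      apply integral_congr_ae
      refine Eventually.of_forall fun t => ?_
      simp only
      rw [tsum_mul_right, Real.exp_eq_exp_ℝ, NormedSpace.exp_eq_tsum_div]
    rw [heq]
    exact key
  · refine Summable.of_nonneg_of_le (fun n => integral_nonneg fun t => norm_nonneg _)
      (f := fun n : ℕ => |M|^n / (n.factorial : ℝ) * ∫ t, ‖e t‖) (fun n => ?_)
      ((Real.summable_pow_div_factorial |M|).mul_right _)
    rw [← integral_const_mul]
    apply integral_mono (hN.mul (φ := fun t => (φ t)^n / (n.factorial : ℝ)) (by fun_prop)).1.norm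
      (hi.norm.const_mul _)
    intro t
    simp only [norm_mul, norm_div, norm_pow]
    by_cases ht : t ∈ Icc 0 B
    · have := (hM t ht).trans (le_abs_self M)
      rw [show ‖(n.factorial : ℝ)‖ = n.factorial by simp]
      gcongr
    · simp [hB t ht]

lemma moment {e : ℝ → ℝ} (he : Nice e) (m C : ℝ)
    (hC : ∀ x : ℝ, 0 ≤ x → |∫ t, Real.exp (-(x*t)) * e t| ≤ C * Real.exp (-(m*x))) :
    ∀ᵐ t : ℝ, t < m → e t = 0 := by
  have hi := he.1
  have step : ∀ τ < m, ∫ t in Ioi τ, e t = ∫ t, e t := by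
    intro τ hτ
    have hb : ∀ k : ℕ, ‖(∫ t, Real.exp (-Real.exp (k * (τ - t))) * e t) - ∫ t, e t‖ ≤
        C * (Real.exp (Real.exp (-(m-τ)*k)) - 1) := by
      intro k
      have h1 := exp_swap he (φ := fun t => -Real.exp (k * (τ - t))) (by fun_prop)
      rw [← hasSum_nat_add_iff' 1] at h1
      simp only [Finset.range_one, Finset.sum_singleton, pow_zero, Nat.factorial_zero, Nat.cast_one,
        div_one, one_mul] at h1
      have h2 : HasSum (fun n : ℕ => C * ((Real.exp (-(m-τ)*k))^(n+1) / ((n+1).factorial : ℝ)))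
          (C * (Real.exp (Real.exp (-(m-τ)*k)) - 1)) := by
        apply HasSum.mul_left
        have := NormedSpace.expSeries_div_hasSum_exp (𝔸 := ℝ) (Real.exp (-(m-τ)*k))
        rw [← hasSum_nat_add_iff' 1, ← Real.exp_eq_exp_ℝ] at this
        simpa using this
      rw [← h1.tsum_eq]
      refine tsum_of_norm_bounded h2 fun n => ?_
      have h3 : ∫ t, (-Real.exp (k * (τ - t)))^(n+1) / ((n+1).factorial : ℝ) * e t
          = (-1)^(n+1) / ((n+1).factorial : ℝ) * Real.exp ((n+1)*k*τ) *
            ∫ t, Real.exp (-(((n+1)*k : ℝ) * t)) * e t := by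
        rw [← integral_const_mul]
        congr 1
        ext t
        rw [neg_pow, ← Real.exp_nat_mul]
        have : Real.exp (((n+1:ℕ):ℝ) * (k * (τ - t))) = Real.exp ((n+1)*k*τ) * Real.exp (-(((n+1)*k : ℝ) * t)) := by
          rw [← Real.exp_add]; congr 1; push_cast; ring
        rw [this]; ring
      rw [h3, norm_mul, norm_mul, norm_div, norm_pow]
      have h4 := hC ((n+1)*k) (by positivity)
      rw [← Real.norm_eq_abs] at h4
      simp only [norm_neg, norm_one, one_pow]
      rw [Real.norm_of_nonneg (Real.exp_nonneg _), Real.norm_natCast]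
      calc _ ≤ 1 / ((n+1).factorial : ℝ) * Real.exp ((n+1)*k*τ) * (C * Real.exp (-(m*((n+1)*k)))) := by
            gcongr
        _ = _ := by
            rw [← Real.exp_nat_mul]
            have : Real.exp (((n+1:ℕ):ℝ) * (-(m-τ)*k)) = Real.exp ((n+1)*k*τ) * Real.exp (-(m*((n+1)*k))) := by
              rw [← Real.exp_add]; congr 1; push_cast; ring
            rw [this]; ring
    have hr : Tendsto (fun k : ℕ => C * (Real.exp (Real.exp (-(m-τ)*k)) - 1)) atTop (𝓝 0) := by
      have h1 : Tendsto (fun k : ℕ => Real.exp (-(m-τ)*k)) atTop (𝓝 0) := by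
        apply Real.tendsto_exp_atBot.comp
        exact tendsto_natCast_atTop_atTop.const_mul_atTop_of_neg (by linarith)
      have h2 := ((Real.continuous_exp.tendsto 0).comp h1).sub_const 1 |>.const_mul C
      simpa using h2
    have l1 : Tendsto (fun k : ℕ => ∫ t, Real.exp (-Real.exp (k * (τ - t))) * e t) atTop
        (𝓝 (∫ t, e t)) := tendsto_iff_norm_sub_tendsto_zero.2
      (squeeze_zero (fun _ => norm_nonneg _) hb hr)
    have l2 : Tendsto (fun k : ℕ => ∫ t, Real.exp (-Real.exp (k * (τ - t))) * e t) atTop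
        (𝓝 (∫ t, (Ioi τ).indicator e t)) := by
      refine tendsto_integral_of_dominated_convergence (fun t => ‖e t‖)
        (fun k => (he.mul (φ := fun t => Real.exp (-Real.exp (k * (τ - t)))) (by fun_prop)).1.1) hi.norm
        (fun k => Eventually.of_forall fun t => ?_) ?_
      · rw [norm_mul, Real.norm_of_nonneg (Real.exp_nonneg _)]
        have : Real.exp (-Real.exp (k * (τ - t))) ≤ 1 :=
          Real.exp_le_one_iff.2 (by have := Real.exp_pos (k * (τ - t)); linarith)
        nlinarith [norm_nonneg (e t)]
      · have hne : ∀ᵐ t : ℝ, t ≠ τ := by simp [ae_iff, measure_singleton]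
        filter_upwards [hne] with t ht
        rcases lt_or_gt_of_ne ht with h | h
        · have : t ∉ Ioi τ := by simp; exact h.le
          rw [indicator_of_notMem this]
          have h1 : Tendsto (fun k : ℕ => Real.exp (-Real.exp (k * (τ - t)))) atTop (𝓝 0) := by
            apply Real.tendsto_exp_atBot.comp
            apply tendsto_neg_atTop_atBot.comp
            apply Real.tendsto_exp_atTop.comp
            exact tendsto_natCast_atTop_atTop.atTop_mul_const (by linarith)
          simpa using h1.mul_const (e t)
        · rw [indicator_of_mem (show t ∈ Ioi τ from h)]
          have h1 : Tendsto (fun k : ℕ => Real.exp (k * (τ - t))) atTop (𝓝 0) := by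
            apply Real.tendsto_exp_atBot.comp
            exact tendsto_natCast_atTop_atTop.atTop_mul_const_of_neg (by linarith)
          have h2 := ((Real.continuous_exp.tendsto (-0)).comp h1.neg).mul_const (e t)
          simpa using h2
    rw [← integral_indicator measurableSet_Ioi]
    exact tendsto_nhds_unique l2 l1
  have step2 : ∀ τ < m, ∫ t in Iic τ, e t = 0 := by
    intro τ hτ
    have h1 := step τ hτ
    have h2 := intervalIntegral.integral_Iic_add_Ioi (b := τ) hi.integrableOn hi.integrableOn
    linarith
  filter_upwards [LocallyIntegrable.ae_hasDerivAt_integral hi.locallyIntegrable] with t ht htm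
  have h1 := ht (m-1)
  have h2 : HasDerivAt (fun x => ∫ (t : ℝ) in (m-1)..x, e t) 0 t := by
    refine (hasDerivAt_const t (0:ℝ)).congr_of_eventuallyEq ?_
    filter_upwards [Iio_mem_nhds htm] with x hx
    rw [← intervalIntegral.integral_Iic_sub_Iic hi.integrableOn hi.integrableOn, step2 x hx,
      step2 (m-1) (by linarith), sub_zero]
  exact h1.unique h2

noncomputable def cv (a b : ℝ → ℝ) : ℝ → ℝ :=
  convolution a b (ContinuousLinearMap.mul ℝ ℝ) volume

lemma cv_apply (a b : ℝ → ℝ) (t : ℝ) : cv a b t = ∫ s, a s * b (t - s) := by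
  simp [cv, convolution_def]

lemma Nice.cv {a b : ℝ → ℝ} (ha : Nice a) (hb : Nice b) : Nice (cv a b) := by
  obtain ⟨hi, A, hA⟩ := ha
  obtain ⟨hi', B, hB⟩ := hb
  refine ⟨Integrable.integrable_convolution _ hi hi', A + B, fun t ht => ?_⟩
  rw [cv_apply]
  have : (fun s => a s * b (t - s)) = fun _ => 0 := by
    ext s
    by_cases h1 : s ∈ Icc 0 A
    · by_cases h2 : t - s ∈ Icc 0 B
      · exfalso
        apply ht
        simp only [mem_Icc] at *
        constructor <;> linarith [h1.1, h1.2, h2.1, h2.2]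
      · simp [hB _ h2]
    · simp [hA _ h1]
  rw [this]; simp

noncomputable def lap (e : ℝ → ℝ) (x : ℝ) : ℝ := ∫ t, Real.exp (-(x*t)) * e t

lemma lap_cv {a b : ℝ → ℝ} (ha : Nice a) (hb : Nice b) (x : ℝ) :
    lap (cv a b) x = lap a x * lap b x := by
  have h := integral_convolution (μ := volume) (ν := volume) (ContinuousLinearMap.mul ℝ ℝ)
    (ha.mul (φ := fun t => Real.exp (-(x*t))) (by fun_prop)).1
    (hb.mul (φ := fun t => Real.exp (-(x*t))) (by fun_prop)).1
  simp only [ContinuousLinearMap.mul_apply'] at h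
  unfold lap
  rw [← h]
  congr 1
  ext t
  rw [cv_apply, convolution_def, ← integral_const_mul]
  congr 1
  ext s
  simp only [ContinuousLinearMap.mul_apply']
  have : Real.exp (-(x*t)) = Real.exp (-(x*s)) * Real.exp (-(x*(t-s))) := by
    rw [← Real.exp_add]; congr 1; ring
  rw [this]; ring

lemma cv_mul_t {a b : ℝ → ℝ} (ha : Nice a) (hb : Nice b) :
    ∀ᵐ t : ℝ, t * cv a b t = cv (fun t => t * a t) b t + cv a (fun t => t * b t) t := by
  have h1 := Integrable.ae_convolution_exists (ContinuousLinearMap.mul ℝ ℝ)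
    (ha.mul continuous_id).1 hb.1
  have h2 := Integrable.ae_convolution_exists (ContinuousLinearMap.mul ℝ ℝ)
    ha.1 (hb.mul continuous_id).1
  filter_upwards [h1, h2] with t h1 h2
  simp only [ConvolutionExistsAt, ContinuousLinearMap.mul_apply', id] at h1 h2
  rw [cv_apply, cv_apply, cv_apply, ← integral_const_mul, ← integral_add h1 h2]
  congr 1
  ext s
  ring

lemma lap_mul_cv {a b : ℝ → ℝ} (ha : Nice a) (hb : Nice b) (x : ℝ) :
    lap (fun t => t * cv a b t) x =
      lap (fun t => t * a t) x * lap b x + lap a x * lap (fun t => t * b t) x := by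
  have ha' : Nice (fun t => t * a t) := ha.mul continuous_id
  have hb' : Nice (fun t => t * b t) := hb.mul continuous_id
  rw [← lap_cv ha' hb, ← lap_cv ha hb']
  unfold lap
  rw [← integral_add ((ha'.cv hb).mul (φ := fun t => Real.exp (-(x*t))) (by fun_prop)).1
    ((ha.cv hb').mul (φ := fun t => Real.exp (-(x*t))) (by fun_prop)).1]
  apply integral_congr_ae
  filter_upwards [cv_mul_t ha hb] with t ht
  rw [ht]; ring

def Zr (e : ℝ → ℝ) (c : ℝ) : Prop := ∀ᵐ t : ℝ, t < c → e t = 0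

lemma Zr.mono {e : ℝ → ℝ} {c d : ℝ} (h : Zr e c) (hd : d ≤ c) : Zr e d := by
  filter_upwards [h] with t ht h1 using ht (by linarith)

lemma Zr.lap {e : ℝ → ℝ} {c : ℝ} (h : Zr e c) (he : Nice e) :
    ∃ C, 0 ≤ C ∧ ∀ x, 0 ≤ x → |lap e x| ≤ C * Real.exp (-(c*x)) := by
  refine ⟨∫ t, ‖e t‖, integral_nonneg fun t => norm_nonneg _, fun x hx => ?_⟩
  rw [← Real.norm_eq_abs, ← integral_mul_const]
  refine norm_integral_le_of_norm_le (he.1.norm.mul_const _) ?_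
  filter_upwards [h] with t ht
  by_cases h1 : t < c
  · simp [ht h1]
  · rw [norm_mul, Real.norm_of_nonneg (Real.exp_nonneg _), mul_comm]
    refine mul_le_mul_of_nonneg_left (Real.exp_le_exp.2 ?_) (norm_nonneg _)
    nlinarith [mul_le_mul_of_nonneg_left (not_lt.1 h1) hx]

lemma Zr_of_sq {e : ℝ → ℝ} (he : Nice e) {m K : ℝ}
    (h : ∀ x, 0 ≤ x → (lap e x)^2 ≤ K * Real.exp (-(2*m*x))) : Zr e m := by
  refine moment he m (Real.sqrt K) fun x hx => ?_
  have h1 := h x hx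
  have hK : 0 ≤ K := by
    by_contra hK
    have := Real.exp_pos (-(2*m*x))
    nlinarith [sq_nonneg (_root_.lap e x)]
  apply abs_le_of_sq_le_sq' .. |> abs_le.2
  · rw [mul_pow, Real.sq_sqrt hK, ← Real.exp_nat_mul]
    rw [show ((2:ℕ):ℝ) * -(m*x) = -(2*m*x) by push_cast; ring]
    exact h1
  · positivity

lemma conc {a b : ℝ → ℝ} (ha : Nice a) (hb : Nice b) {x w : ℝ}
    (h0 : Zr (cv a b) x) (h11 : Zr (cv (fun t => t * a t) (fun t => t * b t)) w)
    {e : ℝ → ℝ} (he : e = cv (fun t => t * a t) b ∨ e = cv a (fun t => t * b t))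
    (h1 : Zr e w) : Zr e ((x+w)/2) := by
  have ha' : Nice (fun t => t * a t) := ha.mul continuous_id
  have hb' : Nice (fun t => t * b t) := hb.mul continuous_id
  have hN : Nice e := by
    rcases he with rfl | rfl
    · exact ha'.cv hb
    · exact ha.cv hb'
  have h2 : Zr (fun t => t * cv a b t) x := by
    filter_upwards [h0] with t ht h using by simp [ht h]
  obtain ⟨C1, p1, q1⟩ := h1.lap hN
  obtain ⟨C2, p2, q2⟩ := h2.lap ((ha.cv hb).mul continuous_id)
  obtain ⟨C3, p3, q3⟩ := h0.lap (ha.cv hb)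
  obtain ⟨C4, p4, q4⟩ := h11.lap (ha'.cv hb')
  refine Zr_of_sq hN (K := C1 * C2 + C3 * C4) fun X hX => ?_
  have key : (lap e X)^2 = lap e X * lap (fun t => t * cv a b t) X
      - lap (cv a b) X * lap (cv (fun t => t * a t) (fun t => t * b t)) X := by
    rw [lap_mul_cv ha hb, lap_cv ha hb, lap_cv ha' hb']
    rcases he with rfl | rfl
    · rw [lap_cv ha' hb]; ring
    · rw [lap_cv ha hb']; ring
  rw [key]
  have hE : Real.exp (-(2*((x+w)/2)*X)) = Real.exp (-(x*X)) * Real.exp (-(w*X)) := by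
    rw [← Real.exp_add]; congr 1; ring
  rw [hE]
  have r1 := mul_le_mul (q1 X hX) (q2 X hX) (abs_nonneg _) (by positivity)
  have r2 := mul_le_mul (q3 X hX) (q4 X hX) (abs_nonneg _) (by positivity)
  rw [← abs_mul] at r1 r2
  have := (abs_le.1 r1).2
  have := (abs_le.1 r2).1
  nlinarith

lemma Zr_sup {e : ℝ → ℝ} {S : Set ℝ} (hS : S.Nonempty) (hb : BddAbove S)
    (h : ∀ c ∈ S, Zr e c) : Zr e (sSup S) := by
  obtain ⟨u, -, hu, hmem⟩ := exists_seq_tendsto_sSup hS hb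
  have : ∀ᵐ t : ℝ, ∀ n, t < u n → e t = 0 := ae_all_iff.2 fun n => h _ (hmem n)
  filter_upwards [this] with t ht hlt
  obtain ⟨n, hn⟩ := (hu.eventually (lt_mem_nhds hlt)).exists
  exact ht n hn

lemma conc_seq (φ : ℕ → ℝ) (h0 : ∀ n, 0 ≤ φ n) (hanti : ∀ n, φ (n+1) ≤ φ n)
    (hc : ∀ n, (φ n + φ (n+2))/2 ≤ φ (n+1)) (n : ℕ) : φ n = φ 0 := by
  have key : ∀ n, φ (n+1) = φ n := by
    intro n
    by_contra hne
    have hlt : φ (n+1) < φ n := lt_of_le_of_ne (hanti n) hne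
    have h1 : ∀ k, φ n - φ (n+1) ≤ φ (n+k) - φ (n+k+1) := by
      intro k
      induction k with
      | zero => simp
      | succ k ih =>
        have := hc (n+k)
        rw [show n + (k+1) = n+k+1 by ring, show n+k+1+1 = n+k+2 by ring]
        linarith
    have h2 : ∀ k : ℕ, φ (n+k) ≤ φ n - k * (φ n - φ (n+1)) := by
      intro k
      induction k with
      | zero => simp
      | succ k ih =>
        have := h1 k
        rw [show n + (k+1) = n+k+1 by ring]
        push_cast
        linarith
    obtain ⟨k, hk⟩ := exists_nat_gt (φ n / (φ n - φ (n+1)))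
    rw [div_lt_iff₀ (by linarith)] at hk
    linarith [h2 k, h0 (n+k)]
  induction n with
  | zero => rfl
  | succ n ih => rw [key, ih]

def pw (a : ℝ → ℝ) (i : ℕ) : ℝ → ℝ := fun t => t^i * a t

lemma Nice.pw {a : ℝ → ℝ} (ha : Nice a) (i : ℕ) : Nice (pw a i) := ha.mul (by fun_prop)

lemma pw_succ (a : ℝ → ℝ) (i : ℕ) : pw a (i+1) = fun t => t * pw a i t := by
  ext t; simp only [pw]; ring

lemma Zr_cv_zero {a b : ℝ → ℝ} (ha : Nice a) (hb : Nice b) : Zr (cv a b) 0 := by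
  obtain ⟨-, B, hB⟩ := ha.cv hb
  exact Eventually.of_forall fun t ht => hB t (by simp; intro h; linarith)

lemma all_pw {a b : ℝ → ℝ} (ha : Nice a) (hb : Nice b) {T : ℝ} (hT : 0 ≤ T)
    (h : Zr (cv a b) T) (i j : ℕ) : Zr (cv (pw a i) (pw b j)) T := by
  let S : ℕ → Set ℝ := fun n => {c | c ≤ T ∧ ∀ i j, i + j ≤ n → Zr (cv (pw a i) (pw b j)) c}
  have hbdd : ∀ n, BddAbove (S n) := fun n => ⟨T, fun c hc => hc.1⟩
  have h0 : ∀ n, (0:ℝ) ∈ S n := fun n => ⟨hT, fun i j _ => Zr_cv_zero (ha.pw i) (hb.pw j)⟩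
  have hmem : ∀ n, sSup (S n) ∈ S n := fun n =>
    ⟨csSup_le ⟨0, h0 n⟩ fun c hc => hc.1, fun i j hij =>
      Zr_sup ⟨0, h0 n⟩ (hbdd n) fun c hc => hc.2 i j hij⟩
  have hanti : ∀ n, sSup (S (n+1)) ≤ sSup (S n) := fun n =>
    csSup_le_csSup (hbdd n) ⟨0, h0 _⟩ fun c hc => ⟨hc.1, fun i j hij => hc.2 i j (by omega)⟩
  have hcs := conc_seq (fun n => sSup (S n)) (fun n => le_csSup (hbdd n) (h0 n)) hanti (by
    intro n
    refine le_csSup (hbdd _) ⟨?_, ?_⟩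
    · linarith [(hmem n).1, (hmem (n+2)).1]
    · intro i j hij
      by_cases hn : i + j ≤ n
      · exact ((hmem n).2 i j hn).mono (by linarith [hanti n, hanti (n+1)])
      · rcases i with _ | i
        · rcases j with _ | j
          · omega
          · refine conc (a := pw a 0) (b := pw b j) (ha.pw _) (hb.pw _)
              ((hmem n).2 _ _ (by omega)) ?_ (Or.inr ?_) ((hmem (n+2)).2 _ _ (by omega))
            · rw [← pw_succ, ← pw_succ]
              exact (hmem (n+2)).2 _ _ (by omega)
            · rw [← pw_succ]
        · refine conc (a := pw a i) (b := pw b j) (ha.pw _) (hb.pw _)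
            ((hmem n).2 _ _ (by omega)) ?_ (Or.inl ?_) ((hmem (n+2)).2 _ _ (by omega))
          · rw [← pw_succ, ← pw_succ]
            exact (hmem (n+2)).2 _ _ (by omega)
          · rw [← pw_succ])
  have hTm : T ∈ S 0 := by
    refine ⟨le_rfl, fun i j hij => ?_⟩
    obtain ⟨rfl, rfl⟩ : i = 0 ∧ j = 0 := by omega
    have e0 : ∀ u : ℝ → ℝ, pw u 0 = u := fun u => by ext t; simp [pw]
    rw [e0, e0]
    exact h
  have h1 := le_csSup (hbdd 0) hTm
  have h2 := hcs (i+j)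
  exact ((hmem (i+j)).2 i j le_rfl).mono (by rw [h2]; exact h1)

lemma prod_zero {a b : ℝ → ℝ} (ha : Nice a) (hb : Nice b) {T : ℝ} (hT : 0 ≤ T)
    (h : Zr (cv a b) T) : ∀ᵐ t : ℝ, ∀ᵐ s : ℝ, t < T → a s * b (t - s) = 0 := by
  have h1 : ∀ᵐ t : ℝ, ∀ i : ℕ, t < T → cv (pw a i) (pw b 0) t = 0 :=
    ae_all_iff.2 fun i => all_pw ha hb hT h i 0
  have h2 := Integrable.ae_convolution_exists (ContinuousLinearMap.mul ℝ ℝ) ha.1 hb.1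
  filter_upwards [h1, h2] with t h1 h2
  by_cases ht : t < T
  swap
  · exact Eventually.of_forall fun s hs => absurd hs ht
  simp only [ConvolutionExistsAt, ContinuousLinearMap.mul_apply'] at h2
  have hk : Nice (fun s => a s * b (t - s)) := by
    obtain ⟨-, A, hA⟩ := ha
    exact ⟨h2, A, fun s hs => by simp [hA s hs]⟩
  have hz : ∀ x : ℝ, ∫ s, Real.exp (-(x*s)) * (a s * b (t - s)) = 0 := by
    intro x
    have h3 := exp_swap hk (φ := fun s => -(x*s)) (by fun_prop)
    refine h3.unique ?_
    convert hasSum_zero using 2 with n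
    have h4 := h1 n ht
    rw [cv_apply] at h4
    have : ∀ s, (-(x*s))^n / (n.factorial : ℝ) * (a s * b (t - s))
        = ((-x)^n / (n.factorial : ℝ)) * (pw a n s * pw b 0 (t - s)) := by
      intro s; simp only [pw]; rw [show -(x*s) = (-x)*s by ring, mul_pow]; ring
    simp_rw [this]
    rw [integral_const_mul, h4, mul_zero]
  have h5 : ∀ᵐ s : ℝ, ∀ n : ℕ, s < n → a s * b (t - s) = 0 :=
    ae_all_iff.2 fun n => moment hk n 0 fun x _ => by rw [hz]; simp
  filter_upwards [h5] with s hs _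
  obtain ⟨n, hn⟩ := exists_nat_gt s
  exact hs n hn

lemma core {a b : ℝ → ℝ} (ha : Nice a) (hb : Nice b) (ma : Measurable a) (mb : Measurable b)
    {T : ℝ} (hT : 0 ≤ T) (h : Zr (cv a b) T) :
    ∀ᵐ s : ℝ, a s ≠ 0 → Zr b (T - s) := by
  have h1 := prod_zero ha hb hT h
  rw [Measure.ae_ae_comm] at h1
  · filter_upwards [h1] with s hs has
    have h2 := (measurePreserving_add_right volume s).quasiMeasurePreserving.ae hs
    filter_upwards [h2] with u hu hlt
    have := hu (by linarith)
    simpa [has] using this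
  · have : {x : ℝ × ℝ | x.1 < T → a x.2 * b (x.1 - x.2) = 0}
        = {x : ℝ × ℝ | x.1 < T}ᶜ ∪ {x : ℝ × ℝ | a x.2 * b (x.1 - x.2) = 0} := by
      ext x; simp only [mem_ofPred_eq, mem_union, mem_compl_iff]; tauto
    rw [this]
    apply MeasurableSet.union
    · exact (measurableSet_lt measurable_fst measurable_const).compl
    · exact measurableSet_eq_fun (by fun_prop) measurable_const

lemma core2 {a b : ℝ → ℝ} (ha : Nice a) (hb : Nice b) (ma : Measurable a) (mb : Measurable b)
    {T : ℝ} (hT : 0 ≤ T) (h : Zr (cv a b) T) :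
    ∃ l m : ℝ, 0 ≤ l ∧ 0 ≤ m ∧ T ≤ l + m ∧ Zr a l ∧ Zr b m := by
  let S : Set ℝ := {c | c ≤ T ∧ Zr a c}
  have hz : ∀ {e}, Nice e → Zr e 0 := by
    rintro e ⟨-, B, hB⟩
    exact Eventually.of_forall fun t ht => hB t (by simp; intro h; linarith)
  have h0 : (0:ℝ) ∈ S := ⟨hT, hz ha⟩
  have hbdd : BddAbove S := ⟨T, fun c hc => hc.1⟩
  have hl : Zr a (sSup S) := Zr_sup ⟨0, h0⟩ hbdd fun c hc => hc.2
  have hl0 : 0 ≤ sSup S := le_csSup hbdd h0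
  have hlT : sSup S ≤ T := csSup_le ⟨0, h0⟩ fun c hc => hc.1
  rcases hlT.eq_or_lt with heq | hlt
  · exact ⟨sSup S, 0, hl0, le_rfl, by linarith, hl, hz hb⟩
  refine ⟨sSup S, T - sSup S, hl0, by linarith, by linarith, hl, ?_⟩
  have hc := core ha hb ma mb hT h
  have hstep : ∀ l' ∈ Ioo (sSup S) T, Zr b (T - l') := by
    rintro l' ⟨h1, h2⟩
    by_contra hcon
    have : l' ∈ S := by
      refine ⟨h2.le, ?_⟩
      filter_upwards [hc] with s hs hsl
      by_contra has
      exact hcon ((hs has).mono (by linarith))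
    exact absurd (le_csSup hbdd this) (by linarith)
  have : T - sSup S = sSup ((fun l => T - l) '' Ioo (sSup S) T) := by
    rw [image_const_sub_Ioo, csSup_Ioo (by linarith)]
  rw [this]
  refine Zr_sup ((nonempty_Ioo.2 hlt).image _) ?_ ?_
  · rw [image_const_sub_Ioo]; exact bddAbove_Ioo
  · rintro _ ⟨l', hl', rfl⟩
    exact hstep l' hl'

lemma niceify {b : ℝ} {f : ℝ → ℝ} (hf : IntegrableOn f (Set.Icc 0 b) volume) :
    ∃ a : ℝ → ℝ, Nice a ∧ Measurable a ∧ a =ᵐ[volume] (Icc 0 b).indicator f := by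
  have h1 := (integrable_indicator_iff measurableSet_Icc).2 hf
  obtain ⟨u, hu, hfu⟩ := h1.1
  have he : (Icc 0 b).indicator u =ᵐ[volume] (Icc 0 b).indicator f := by
    filter_upwards [hfu] with t ht
    by_cases h : t ∈ Icc 0 b
    · simp only [indicator_of_mem h] at *; exact ht.symm
    · simp [h]
  exact ⟨(Icc 0 b).indicator u, ⟨h1.congr he.symm, b, fun t ht => by simp [ht]⟩,
    hu.measurable.indicator measurableSet_Icc, he⟩

lemma Zr_final {b : ℝ} {f a : ℝ → ℝ} (he : a =ᵐ[volume] (Icc 0 b).indicator f) {l : ℝ}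
    (hz : Zr a l) : ∀ᵐ t ∂(volume.restrict (Set.Icc (0:ℝ) (min l b))), f t = 0 := by
  rw [ae_restrict_iff' measurableSet_Icc]
  have hne : ∀ᵐ t : ℝ, t ≠ l := by simp [ae_iff, measure_singleton]
  filter_upwards [he, hz, hne] with t h1 h2 h3 h4
  have h5 : t ≤ l := h4.2.trans (min_le_left _ _)
  rw [h2 (lt_of_le_of_ne h5 h3), indicator_of_mem (show t ∈ Icc 0 b from ⟨h4.1, h4.2.trans (min_le_right _ _)⟩)] at h1
  exact h1.symm

theorem titchmarsh (b : ℝ) (hb : 0 < b) (f g : ℝ → ℝ)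
    (hf : IntegrableOn f (Set.Icc 0 b) volume) (hg : IntegrableOn g (Set.Icc 0 b) volume)
    (h : ∀ᵐ t ∂(volume.restrict (Set.Icc (0:ℝ) b)),
      ∫ s in (0:ℝ)..t, f (t - s) * g s = 0) :
    ∃ lam mu : ℝ, 0 ≤ lam ∧ 0 ≤ mu ∧ b ≤ lam + mu ∧
      (∀ᵐ t ∂(volume.restrict (Set.Icc (0:ℝ) lam)), f t = 0) ∧
      (∀ᵐ t ∂(volume.restrict (Set.Icc (0:ℝ) mu)), g t = 0) := by
  obtain ⟨F, hF, mF, eF⟩ := niceify hf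
  obtain ⟨G, hG, mG, eG⟩ := niceify hg
  have hcv : cv G F = cv ((Icc 0 b).indicator g) ((Icc 0 b).indicator f) :=
    convolution_congr _ eG eF
  have hz : Zr (cv G F) b := by
    rw [ae_restrict_iff' measurableSet_Icc] at h
    filter_upwards [h, Zr_cv_zero hG hF] with t ht h0 htb
    by_cases ht0 : t < 0
    · exact h0 ht0
    push Not at ht0
    rw [hcv, cv_apply]
    refine Eq.trans ?_ (ht ⟨ht0, htb.le⟩)
    rw [intervalIntegral.integral_of_le ht0,
      ← integral_Icc_eq_integral_Ioc, ← integral_indicator measurableSet_Icc]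
    congr 1
    ext s
    by_cases hs : s ∈ Icc 0 t
    · have h1 : s ∈ Icc 0 b := ⟨hs.1, hs.2.trans htb.le⟩
      have h2 : t - s ∈ Icc 0 b := ⟨by linarith [hs.2], by linarith [hs.1]⟩
      rw [indicator_of_mem hs, indicator_of_mem h1, indicator_of_mem h2, mul_comm]
    · rw [indicator_of_notMem hs]
      by_cases h1 : 0 ≤ s
      · have h2 : t - s ∉ Icc 0 b := fun h => hs ⟨h1, by linarith [h.1]⟩
        rw [indicator_of_notMem h2, mul_zero]
      · have h2 : s ∉ Icc 0 b := fun h => h1 h.1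
        rw [indicator_of_notMem h2, zero_mul]
  obtain ⟨m, l, hm, hl, hml, zm, zl⟩ := core2 hG hF mG mF hb.le hz
  refine ⟨min l b, min m b, le_min hl hb.le, le_min hm hb.le, ?_, Zr_final eF zl, Zr_final eG zm⟩
  rcases min_cases l b with h1 | h1 <;> rcases min_cases m b with h2 | h2 <;> linarith
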